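/- arXiv:2105.02496 — 2 statements merged into one kernel-verified Lean document; each statement's English description precedes it below -/
import Mathlib

section
/- Let G be a prolific graph. Then e(L^2(G)) ≥ e(G) + 1. -/
open SimpleGraph

/-- A bundled simple graph: a vertex type together with a simple graph on it. -/
structure FGraph where
  V : Type
  G : SimpleGraph V

/-- The line graph of a bundled graph: the vertices are the edges of `G`, two distinct
edges being adjacent iff they share an endpoint. -/
def FGraph.line (X : FGraph) : FGraph := ⟨X.G.edgeSet, X.G.lineGraph⟩

/-- The `k`-fold iterated line graph `L^k(G)`. -/
def FGraph.iter (X : FGraph) (k : ℕ) : FGraph := FGraph.line^[k] X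

/-- The number of vertices `n(G)`. -/
noncomputable def FGraph.n (X : FGraph) : ℕ := Nat.card X.V

/-- The number of edges `e(G)`. -/
noncomputable def FGraph.e (X : FGraph) : ℕ := Nat.card X.G.edgeSet

/-- The degree of a vertex. -/
noncomputable def FGraph.deg (X : FGraph) (v : X.V) : ℕ := Nat.card (X.G.neighborSet v)

/-- The maximum degree `Δ(G)`. -/
noncomputable def FGraph.maxDeg (X : FGraph) : ℕ := sSup (Set.range X.deg)

/-- The minimum degree `δ(G)`. -/
noncomputable def FGraph.minDeg (X : FGraph) : ℕ := sInf (Set.range X.deg)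

/-- The average degree `d(G) = 2e(G)/n(G)`, as a rational number. -/
noncomputable def FGraph.avgDeg (X : FGraph) : ℚ := 2 * (X.e : ℚ) / (X.n : ℚ)

/-- A graph is prolific if it is connected and isomorphic to no path graph `P_k`,
to no cycle graph `C_k`, and not to the star `K_{1,3}`. -/
def FGraph.Prolific (X : FGraph) : Prop :=
  X.G.Connected ∧
  (∀ k : ℕ, IsEmpty (X.G ≃g pathGraph k)) ∧
  (∀ k : ℕ, IsEmpty (X.G ≃g cycleGraph k)) ∧
  IsEmpty (X.G ≃g completeBipartiteGraph (Fin 1) (Fin 3))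

/-!
Write `m`, `n` for the numbers of edges and vertices of `G`. The edge `uv` has degree
`d(u) + d(v) - 2` in `L(G)`, so summing over all edges gives `∑ d(v)² = 2 e(L(G)) + 2m`, that is,
`2 (e(L(G)) + n - 2m) = ∑ (d(v) - 1)(d(v) - 2)`. The right-hand side is positive as soon as some
vertex has degree at least three. A connected graph without such a vertex is a path or a cycle, and
if `G` has one while `L(G)` has none, then `G` is `K_{1,3}`; so the inequality `e(L) + n > 2m` is
available for both `G` and `L(G)`. Since `n ≤ m + 1`, it first gives `e(L(G)) ≥ m`, and then
`e(L²(G)) > 2 e(L(G)) - m ≥ m`.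
-/

section Connectivity

variable {V : Type*} {G : SimpleGraph V}

lemma eq_univ_of_forall_adj_mem (hG : G.Preconnected) {s : Set V} (hs : s.Nonempty)
    (h : ∀ u ∈ s, ∀ v, G.Adj u v → v ∈ s) : s = Set.univ := by
  obtain ⟨u, hu⟩ := hs
  refine Set.eq_univ_of_forall fun v ↦ by_contra fun hv ↦ ?_
  obtain ⟨p⟩ := hG u v
  obtain ⟨d, -, hfst, hsnd⟩ := p.exists_boundary_dart s hu hv
  exact hsnd (h _ hfst _ d.adj)

lemma subgraph_eq_top_of_forall_neighborSet_subset (hG : G.Preconnected) {H : G.Subgraph}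
    (hH : H.verts.Nonempty) (h : ∀ v ∈ H.verts, G.neighborSet v ⊆ H.neighborSet v) : H = ⊤ := by
  have hverts : H.verts = Set.univ :=
    eq_univ_of_forall_adj_mem hG hH fun u hu v huv ↦ (h u hu huv).snd_mem
  refine Subgraph.ext hverts (funext₂ fun u v ↦ propext ⟨fun huv ↦ huv.adj_sub, fun huv ↦ ?_⟩)
  exact h u (hverts ▸ Set.mem_univ u) huv

lemma neighborSet_subset_of_degree_le_ncard {H : G.Subgraph} {v : V} [Fintype (G.neighborSet v)]
    (h : G.degree v ≤ (H.neighborSet v).ncard) : G.neighborSet v ⊆ H.neighborSet v := by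
  refine (Set.eq_of_subset_of_ncard_le (H.neighborSet_subset v) ?_).ge
  rwa [← Nat.card_coe_set_eq, Nat.card_eq_fintype_card, G.card_neighborSet_eq_degree]

lemma ncard_neighborSet_copy_toSubgraph {W : Type*} {H : SimpleGraph W} (f : Copy H G) (a : W)
    [Fintype (H.neighborSet a)] : (f.toSubgraph.neighborSet (f a)).ncard = H.degree a := by
  have hinj : Function.Injective f := f.injective
  have himage : f.toSubgraph.neighborSet (f a) = f '' H.neighborSet a := by
    ext w
    simp [Relation.map_apply, hinj.eq_iff]
  rw [himage, Set.ncard_image_of_injective _ hinj, ← Nat.card_coe_set_eq,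
    Nat.card_eq_fintype_card, H.card_neighborSet_eq_degree]

end Connectivity

section MaximumDegreeTwo

variable {V : Type*} {G : SimpleGraph V}

lemma toSubgraph_adj_start_of_longest (hG : G.IsAcyclic) {u v w : V} {p : G.Walk u v}
    (hp : p.IsPath) (hmax : ∀ (x y : V) (q : G.Walk x y), q.IsPath → q.length ≤ p.length)
    (hw : G.Adj u w) : p.toSubgraph.Adj u w := by
  have hmem : w ∈ p.support := by
    by_contra hmem
    simpa using hmax _ _ _ (hp.cons (h := hw.symm) hmem)
  have hnil : ¬ p.Nil := by
    rintro ⟨⟩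
    exact hw.ne' (by simpa using hmem)
  rw [hG.eq_snd_of_adj_start hp hw hmem]
  exact p.toSubgraph_adj_snd hnil

variable [G.LocallyFinite]

lemma exists_iso_cycleGraph_of_not_isAcyclic (hG : G.Preconnected) (hdeg : ∀ v, G.degree v ≤ 2)
    (hcyc : ¬ G.IsAcyclic) : ∃ n, Nonempty (G ≃g cycleGraph n) := by
  obtain ⟨n, hn, ⟨f⟩⟩ : ∃ n ≥ 3, cycleGraph n ⊑ G := by
    simpa [isAcyclic_iff_free_cycleGraph] using hcyc
  obtain ⟨n, rfl⟩ := Nat.exists_eq_add_of_le' hn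
  have htop : f.toSubgraph = ⊤ := by
    refine subgraph_eq_top_of_forall_neighborSet_subset hG ⟨f 0, 0, trivial, rfl⟩ ?_
    rintro _ ⟨a, -, rfl⟩
    apply neighborSet_subset_of_degree_le_ncard
    rw [f.toHom_apply, ncard_neighborSet_copy_toSubgraph, cycleGraph_degree_three_le]
    exact hdeg _
  exact ⟨n + 3, ⟨(f.isoToSubgraph.trans (htop ▸ Subgraph.topIso)).symm⟩⟩

lemma exists_iso_pathGraph_of_isAcyclic [Finite G.edgeSet] (hG : G.Connected)
    (hdeg : ∀ v, G.degree v ≤ 2) (hacyc : G.IsAcyclic) : ∃ n, Nonempty (G ≃g pathGraph n) := by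
  classical
  have := hG.nonempty
  obtain ⟨u, v, p, hp, hmax⟩ := Walk.exists_isPath_forall_isPath_length_le_length G
  have hstart : G.neighborSet u ⊆ p.toSubgraph.neighborSet u := fun w hw ↦
    toSubgraph_adj_start_of_longest hacyc hp hmax hw
  have hend : G.neighborSet v ⊆ p.toSubgraph.neighborSet v := fun w hw ↦ by
    simpa using toSubgraph_adj_start_of_longest hacyc hp.reverse (by simpa using hmax) hw
  have htop : p.toSubgraph = ⊤ := by
    refine subgraph_eq_top_of_forall_neighborSet_subset hG.preconnected ⟨u, by simp⟩ ?_
    intro x hx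
    obtain ⟨i, rfl, hi⟩ := Walk.mem_support_iff_exists_getVert.mp (p.mem_verts_toSubgraph.mp hx)
    rcases eq_or_ne i 0 with rfl | hi₀
    · rwa [p.getVert_zero]
    rcases hi.eq_or_lt with rfl | hi₁
    · rwa [p.getVert_length]
    · apply neighborSet_subset_of_degree_le_ncard
      rw [hp.ncard_neighborSet_toSubgraph_internal_eq_two hi₀ hi₁]
      exact hdeg _
  exact ⟨p.length + 1, ⟨(hp.pathGraphIsoToSubgraph.trans (htop ▸ Subgraph.topIso)).symm⟩⟩

end MaximumDegreeTwo

section Star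

variable {V : Type*} {G : SimpleGraph V} {v : V}

lemma eq_starGraph_of_forall_adj_degree_eq_one [G.LocallyFinite] (hG : G.Preconnected)
    (h : ∀ a, G.Adj v a → G.degree a = 1) : G = starGraph v := by
  have hleaf (a b) (hva : G.Adj v a) (hab : G.Adj a b) : b = v :=
    (degree_eq_one_iff_existsUnique_adj.mp (h a hva)).unique hab hva.symm
  have huniv : insert v (G.neighborSet v) = Set.univ := by
    refine eq_univ_of_forall_adj_mem hG (Set.insert_nonempty _ _) ?_
    rintro a (rfl | hva) b hab
    · exact Or.inr hab
    · exact Or.inl (hleaf a b hva hab)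
  have hadj (x) (hx : x ≠ v) : G.Adj v x := (huniv.ge (Set.mem_univ x)).resolve_left hx
  ext x y
  rw [starGraph_adj]
  refine ⟨fun hxy ↦ ⟨hxy.ne, or_iff_not_imp_left.mpr fun hx ↦ hleaf x y (hadj x hx) hxy⟩, ?_⟩
  rintro ⟨hne, rfl | rfl⟩
  · exact hadj y hne.symm
  · exact (hadj x hne).symm

/-- The star graph as the complete bipartite graph between its centre and its leaves. -/
def starGraphIsoCompleteBipartiteGraph [DecidableEq V] (r : V) :
    starGraph r ≃g completeBipartiteGraph {x // x = r} {x // x ≠ r} :=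
  RelIso.symm
    { toEquiv := Equiv.sumCompl (· = r)
      map_rel_iff' := by rintro (⟨x, rfl⟩ | ⟨x, hx⟩) (⟨y, rfl⟩ | ⟨y, hy⟩) <;> simp [*, Ne.symm] }

lemma nonempty_starGraph_iso_completeBipartiteGraph (r : V)
    [Fintype ((starGraph r).neighborSet r)] :
    Nonempty (starGraph r ≃g completeBipartiteGraph (Fin 1) (Fin ((starGraph r).degree r))) := by
  classical
  let e : {x // x ≠ r} ≃ (starGraph r).neighborSet r :=
    Equiv.subtypeEquivRight fun x ↦ by simp [eq_comm]
  exact ⟨(starGraphIsoCompleteBipartiteGraph r).trans <|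
    completeBipartiteGraphCongr (Equiv.ofUnique _ _)
      (e.trans (Fintype.equivFinOfCardEq ((starGraph r).card_neighborSet_eq_degree r)))⟩

end Star

section LineGraph

variable {V : Type*} {G : SimpleGraph V}

lemma degree_lineGraph_add_two {u v : V} (h : G.Adj u v) [Fintype (G.neighborSet u)]
    [Fintype (G.neighborSet v)] [Fintype (G.lineGraph.neighborSet ⟨s(u, v), h⟩)] :
    G.lineGraph.degree ⟨s(u, v), h⟩ + 2 = G.degree u + G.degree v := by
  classical
  have hadj (e : G.edgeSet) :
      G.lineGraph.Adj ⟨s(u, v), h⟩ e ↔ e.1 ≠ s(u, v) ∧ (u ∈ e.1 ∨ v ∈ e.1) := by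
    simp [lineGraph_adj_iff_exists, Subtype.ext_iff, eq_comm]
  have hunion : (G.lineGraph.neighborFinset ⟨s(u, v), h⟩).map (.subtype _) =
      (G.incidenceFinset u ∪ G.incidenceFinset v).erase s(u, v) := by
    ext e
    by_cases he : e ∈ G.edgeSet <;> simp [hadj, he, incidenceSet]
  have hinter : G.incidenceFinset u ∩ G.incidenceFinset v = {s(u, v)} := by
    simpa [← Finset.coe_inj] using G.incidenceSet_inter_incidenceSet_of_adj h
  have hmem : s(u, v) ∈ G.incidenceFinset u ∪ G.incidenceFinset v := by simp [h]
  have hcard := Finset.card_union_add_card_inter (G.incidenceFinset u) (G.incidenceFinset v)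
  rw [hinter, Finset.card_singleton, ← Finset.card_erase_add_one hmem, ← hunion, Finset.card_map,
    card_neighborFinset_eq_degree] at hcard
  simpa using hcard

lemma sum_degree_sq [Fintype V] [DecidableRel G.Adj] [DecidableRel G.lineGraph.Adj] :
    ∑ v, G.degree v ^ 2 = 2 * G.lineGraph.edgeFinset.card + 2 * G.edgeFinset.card := by
  classical
  have hcard (v : V) : Finset.card {e : G.edgeSet | v ∈ e.1} = G.degree v := by
    rw [← card_incidenceFinset_eq_degree, ← Finset.card_map (.subtype _)]
    congr 1
    ext e
    simp [incidenceSet, and_comm]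
  have hdeg (e : G.edgeSet) : ∑ v with v ∈ e.1, G.degree v = G.lineGraph.degree e + 2 := by
    obtain ⟨e, he⟩ := e
    induction e with | h u v
    have hends : Finset.filter (· ∈ s(u, v)) Finset.univ = {u, v} := by ext; simp
    rw [hends, Finset.sum_pair he.ne, degree_lineGraph_add_two he]
  calc ∑ v, G.degree v ^ 2
      = ∑ v, ∑ e : G.edgeSet with v ∈ e.1, G.degree v := by simp [hcard, sq]
    _ = ∑ e : G.edgeSet, ∑ v with v ∈ e.1, G.degree v := by
      simp only [Finset.sum_filter]
      exact Finset.sum_comm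
    _ = ∑ e, (G.lineGraph.degree e + 2) := by simp only [hdeg]
    _ = 2 * G.lineGraph.edgeFinset.card + 2 * G.edgeFinset.card := by
      rw [Finset.sum_add_distrib, sum_degrees_eq_twice_card_edges, Finset.sum_const,
        Finset.card_univ, ← edgeFinset_card, smul_eq_mul, mul_comm G.edgeFinset.card]

lemma two_mul_card_edgeSet_lt_card_edgeSet_lineGraph_add_card [Fintype V] [DecidableRel G.Adj]
    {v : V} (hv : 3 ≤ G.degree v) :
    2 * Nat.card G.edgeSet < Nat.card G.lineGraph.edgeSet + Nat.card V := by
  classical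
  have hlt : ∑ x, 3 * G.degree x < ∑ x, (G.degree x ^ 2 + 2) := by
    refine Finset.sum_lt_sum (fun x _ ↦ ?_) ⟨v, Finset.mem_univ v, by nlinarith⟩
    -- `(d - 1) * (d - 2) ≥ 0` for every natural number `d`
    rcases G.degree x with _ | _ | d <;> nlinarith
  rw [← Finset.mul_sum, Finset.sum_add_distrib, sum_degree_sq, sum_degrees_eq_twice_card_edges,
    Finset.sum_const, Finset.card_univ, smul_eq_mul] at hlt
  simp only [Nat.card_eq_fintype_card, ← edgeFinset_card]
  linarith

end LineGraph

section DegreeThree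

variable {V : Type*} {G : SimpleGraph V}

lemma exists_three_le_degree [G.LocallyFinite] [Finite G.edgeSet] (hG : G.Connected)
    (hpath : ∀ n, IsEmpty (G ≃g pathGraph n)) (hcycle : ∀ n, IsEmpty (G ≃g cycleGraph n)) :
    ∃ v, 3 ≤ G.degree v := by
  by_contra! hdeg
  have hdeg (v) : G.degree v ≤ 2 := Nat.le_of_lt_succ (hdeg v)
  by_cases hacyc : G.IsAcyclic
  · obtain ⟨n, ⟨φ⟩⟩ := exists_iso_pathGraph_of_isAcyclic hG hdeg hacyc
    exact (hpath n).false φ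
  · obtain ⟨n, ⟨φ⟩⟩ := exists_iso_cycleGraph_of_not_isAcyclic hG.preconnected hdeg hacyc
    exact (hcycle n).false φ

lemma exists_three_le_degree_lineGraph [G.LocallyFinite] [G.lineGraph.LocallyFinite]
    (hG : G.Preconnected) {v : V} (hv : 3 ≤ G.degree v)
    (hstar : IsEmpty (G ≃g completeBipartiteGraph (Fin 1) (Fin 3))) :
    ∃ e, 3 ≤ G.lineGraph.degree e := by
  by_contra! hline
  have hsum (a) (ha : G.Adj v a) : G.degree v + G.degree a ≤ 4 := by
    rw [← degree_lineGraph_add_two ha]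
    exact Nat.add_le_add_right (Nat.le_of_lt_succ (hline _)) 2
  have hpos (a) (ha : G.Adj v a) : 0 < G.degree a :=
    (G.degree_pos_iff_exists_adj a).mpr ⟨v, ha.symm⟩
  obtain ⟨a, ha⟩ := (G.degree_pos_iff_exists_adj v).mp (by lia)
  have hcentre : G.degree v = 3 := by linarith [hsum a ha, hpos a ha]
  have hleaf (b) (hb : G.Adj v b) : G.degree b = 1 := by linarith [hsum b hb, hpos b hb]
  obtain rfl := eq_starGraph_of_forall_adj_degree_eq_one hG hleaf
  obtain ⟨φ⟩ := nonempty_starGraph_iso_completeBipartiteGraph v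
  exact hstar.false (hcentre ▸ φ)

end DegreeThree

/-- For a prolific graph, `e(L²(G)) ≥ e(G) + 1`. -/
theorem edges_iter_two (X : FGraph) [Finite X.V] (hp : X.Prolific) :
    (X.iter 2).e ≥ X.e + 1 := by
  classical
  obtain ⟨hconn, hpath, hcycle, hstar⟩ := hp
  have := Fintype.ofFinite X.V
  obtain ⟨v, hv⟩ := exists_three_le_degree hconn hpath hcycle
  obtain ⟨e, he⟩ := exists_three_le_degree_lineGraph hconn.preconnected hv hstar
  have hG := two_mul_card_edgeSet_lt_card_edgeSet_lineGraph_add_card hv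
  have hL := two_mul_card_edgeSet_lt_card_edgeSet_lineGraph_add_card he
  have htree := hconn.card_vert_le_card_edgeSet_add_one
  change Nat.card X.G.edgeSet + 1 ≤ Nat.card X.G.lineGraph.lineGraph.edgeSet
  lia
end

section
/- Let G be a prolific graph. Then c(L(G)) > c(G), where c(H) denotes the circumference of H, i.e. the length of a longest cycle in H, taken to be 0 if H has no cycle. -/
open SimpleGraph

/-- The circumference `c(G)`: the length of a longest cycle, taken to be `0` if
there is no cycle. -/
noncomputable def FGraph.circumf (X : FGraph) : ℕ :=
  sSup {n | ∃ (v : X.V) (w : X.G.Walk v v), w.IsCycle ∧ w.length = n}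

/-!
A finite connected graph whose vertices all have degree at most two is a path or a cycle, so a
prolific graph has a vertex of degree at least three; three edges at that vertex form a triangle in
the line graph. Moreover, a cycle `C` of the graph cannot be the whole graph, so by connectivity
some edge `e` outside `C` meets `C` at a vertex `v`. The edges of `C`, read from `v` and preceded by
`e`, then form a cycle of the line graph with one vertex more than `C`.
-/

variable {V W : Type*} {G : SimpleGraph V}

/-- The set of lengths of cycles of a graph; its supremum is the circumference. -/
def cycleLengths (G : SimpleGraph V) : Set ℕ :=
  {n | ∃ (v : V) (w : G.Walk v v), w.IsCycle ∧ w.length = n}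

theorem bddAbove_cycleLengths (G : SimpleGraph V) [Finite G.edgeSet] :
    BddAbove (cycleLengths G) := by
  have := Fintype.ofFinite G.edgeSet
  refine ⟨G.edgeFinset.card, ?_⟩
  rintro _ ⟨v, w, hw, rfl⟩
  exact hw.isTrail.length_le_card_edgeFinset

theorem length_mem_cycleLengths_of_isChain {l : List V} (hnodup : l.Nodup)
    (hlen : 3 ≤ l.length) (hchain : l.IsChain G.Adj) (hne : l ≠ [])
    (hclose : G.Adj (l.getLast hne) (l.head hne)) : l.length ∈ cycleLengths G := by
  let w : G.Walk (l.getLast hne) (l.getLast hne) := .cons hclose (.ofSupport l hne hchain)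
  have hwlen : w.length = l.length := by
    rw [Walk.length_cons, Walk.length_ofSupport, Nat.sub_add_cancel (by omega)]
  have hpath : w.tail.IsPath := by simpa [w, Walk.isPath_def] using hnodup
  exact ⟨_, w, Walk.isCycle_iff_isPath_tail_and_le_length.mpr ⟨hpath, hwlen ▸ hlen⟩, hwlen⟩

section LineGraph

theorem length_mem_cycleLengths_lineGraph {l : List (Sym2 V)} (hl : ∀ e ∈ l, e ∈ G.edgeSet)
    (hnodup : l.Nodup) (hlen : 3 ≤ l.length)
    (hchain : l.IsChain fun e f ↦ ∃ v, v ∈ e ∧ v ∈ f) (hne : l ≠ [])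
    (hclose : ∃ v, v ∈ l.getLast hne ∧ v ∈ l.head hne) :
    l.length ∈ cycleLengths G.lineGraph := by
  lift l to List G.edgeSet using hl
  simp only [List.length_map] at hlen ⊢
  have hne' : l ≠ [] := hne ∘ List.map_eq_nil_iff.mpr
  have hnodup' : l.Nodup := hnodup.of_map
  refine length_mem_cycleLengths_of_isChain hnodup' hlen ?_ hne' ?_
  · have hshare := List.isChain_iff_getElem.mp ((List.isChain_map _).mp hchain)
    refine List.isChain_iff_getElem.mpr fun i hi ↦
      lineGraph_adj_iff_exists.mpr ⟨?_, hshare i hi⟩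
    exact hnodup'.getElem_inj_iff.not.mpr (by omega)
  · rw [List.getLast_map, List.head_map] at hclose
    refine lineGraph_adj_iff_exists.mpr ⟨?_, hclose⟩
    rw [List.getLast_eq_getElem, List.head_eq_getElem]
    exact hnodup'.getElem_inj_iff.not.mpr (by omega)

theorem three_mem_cycleLengths_lineGraph {v : V} (hv : 2 < (G.neighborSet v).encard) :
    3 ∈ cycleLengths G.lineGraph := by
  obtain ⟨s, hs, hcard⟩ := Set.exists_subset_encard_eq (Order.add_one_le_of_lt hv)
  obtain ⟨a, b, c, hab, hac, hbc, rfl⟩ := Set.encard_eq_three.mp hcard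
  simp only [Set.insert_subset_iff, Set.singleton_subset_iff, mem_neighborSet] at hs
  exact length_mem_cycleLengths_lineGraph (l := [s(v, a), s(v, b), s(v, c)])
    (by simpa using hs) (by simp [hab, hac, hbc, hs.2.1.ne, hs.2.2.ne]) le_rfl
    (by simp) (by simp) ⟨v, by simp⟩

theorem length_mem_cycleLengths_lineGraph_of_isTrail {u v : V} {p : G.Walk u v} (hp : p.IsTrail)
    (hlen : 3 ≤ p.length) (hclose : ∃ x, x ∈ s(p.penultimate, v) ∧ x ∈ s(u, p.snd)) :
    p.length ∈ cycleLengths G.lineGraph := by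
  have hne : p.edges ≠ [] := by
    rw [← List.length_pos_iff, Walk.length_edges]
    omega
  have hchain : p.edges.IsChain fun e f ↦ ∃ x, x ∈ e ∧ x ∈ f := by
    refine (List.isChain_map _).mpr (p.isChain_dartAdj_darts.imp fun d d' h ↦ ⟨d.snd, ?_, ?_⟩)
    · exact Sym2.mem_mk_right _ _
    · rw [h]
      exact Sym2.mem_mk_left _ _
  rw [← p.length_edges]
  refine length_mem_cycleLengths_lineGraph p.edges_subset_edgeSet hp.edges_nodup
    (by simpa using hlen) hchain hne ?_
  simpa using hclose

theorem length_add_one_mem_cycleLengths_lineGraph {u v x : V} {w : G.Walk u u} (hw : w.IsCycle)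
    (hv : v ∈ w.support) (hvx : G.Adj v x) (hnot : s(v, x) ∉ w.edges) :
    w.length + 1 ∈ cycleLengths G.lineGraph := by
  classical
  have hedge : s(x, v) ∉ (w.rotate v hv).edges := by
    rwa [(w.rotate_edges v hv).mem_iff, Sym2.eq_swap]
  have htrail : (Walk.cons hvx.symm (w.rotate v hv)).IsTrail :=
    Walk.isTrail_cons _ _ |>.mpr ⟨(hw.rotate hv).isTrail, hedge⟩
  have hlen : (Walk.cons hvx.symm (w.rotate v hv)).length = w.length + 1 := by simp
  have := hw.three_le_length
  rw [← hlen]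
  exact length_mem_cycleLengths_lineGraph_of_isTrail htrail (by omega) ⟨v, by simp⟩

end LineGraph

section Connected

theorem eq_top_of_forall_neighborSet_subset (hG : G.Preconnected) {H : G.Subgraph}
    (hne : H.verts.Nonempty) (hH : ∀ v ∈ H.verts, G.neighborSet v ⊆ H.neighborSet v) :
    H = ⊤ := by
  obtain ⟨u, hu⟩ := hne
  have hverts (v : V) : v ∈ H.verts := by
    obtain ⟨p⟩ := hG u v
    induction p with
    | nil => exact hu
    | cons hadj _ ih => exact ih (hH _ hu hadj).snd_mem
  ext a b
  · simp [hverts]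
  · exact ⟨fun h ↦ h.adj_sub, fun h ↦ hH a (hverts a) h⟩

theorem neighborSet_subset_of_encard_le_two {H : G.Subgraph} {v : V}
    (hG : (G.neighborSet v).encard ≤ 2) (hH : (H.neighborSet v).encard = 2) :
    G.neighborSet v ⊆ H.neighborSet v :=
  (Set.finite_of_encard_eq_coe hH).eq_of_subset_of_encard_le (H.neighborSet_subset v)
    (hH ▸ hG) |>.ge

theorem encard_neighborSet_toSubgraph_of_isCycle {u v : V} {w : G.Walk u u} (hw : w.IsCycle)
    (hv : v ∈ w.support) : (w.toSubgraph.neighborSet v).encard = 2 := by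
  rw [← w.finite_neighborSet_toSubgraph.cast_ncard_eq, hw.ncard_neighborSet_toSubgraph_eq_two hv]
  rfl

theorem exists_adj_notMem_edges_of_isCycle (hG : G.Preconnected) {b : V}
    (hb : 2 < (G.neighborSet b).encard) {u : V} {w : G.Walk u u} (hw : w.IsCycle) :
    ∃ v ∈ w.support, ∃ x, G.Adj v x ∧ s(v, x) ∉ w.edges := by
  by_contra! h
  have htop : w.toSubgraph = ⊤ :=
    eq_top_of_forall_neighborSet_subset hG ⟨u, by simp⟩ fun v hv x hvx ↦
      w.adj_toSubgraph_iff_mem_edges.mpr (h v (by simpa using hv) x hvx)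
  have hb' : b ∈ w.support := by simp [← Walk.mem_verts_toSubgraph, htop]
  have := encard_neighborSet_toSubgraph_of_isCycle hw hb'
  rw [htop] at this
  exact hb.ne' this

theorem circumference_line_gt_general (hG : G.Preconnected)
    (hbranch : ∃ v, 2 < (G.neighborSet v).encard) (hbdd : BddAbove (cycleLengths G.lineGraph)) :
    sSup (cycleLengths G) < sSup (cycleLengths G.lineGraph) := by
  obtain ⟨b, hb⟩ := hbranch
  have hthree : 3 ≤ sSup (cycleLengths G.lineGraph) :=
    le_csSup hbdd (three_mem_cycleLengths_lineGraph hb)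
  refine Nat.lt_of_le_sub_one (by omega) (csSup_le' ?_)
  rintro _ ⟨u, w, hw, rfl⟩
  obtain ⟨v, hv, x, hvx, hnot⟩ := exists_adj_notMem_edges_of_isCycle hG hb hw
  exact Nat.le_sub_one_of_lt
    (le_csSup hbdd (length_add_one_mem_cycleLengths_lineGraph hw hv hvx hnot))

end Connected

section MaxDegreeTwo

theorem encard_neighborSet_cycleGraph {n : ℕ} (hn : 3 ≤ n) (i : Fin n) :
    ((cycleGraph n).neighborSet i).encard = 2 := by
  obtain ⟨m, rfl⟩ := Nat.exists_eq_add_of_le' hn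
  rw [← coe_neighborFinset, Set.encard_coe_eq_coe_finsetCard, card_neighborFinset_eq_degree,
    cycleGraph_degree_three_le]
  rfl

theorem encard_neighborSet_toSubgraph_copy {H : SimpleGraph W} (f : Copy H G) (a : W) :
    (f.toSubgraph.neighborSet (f a)).encard = (H.neighborSet a).encard := by
  have hinj : Function.Injective f := f.injective
  have himage : f.toSubgraph.neighborSet (f a) = f '' H.neighborSet a := by
    ext x
    simp [Relation.Map, hinj.eq_iff]
  rw [himage, hinj.encard_image]

theorem nonempty_iso_cycleGraph (hG : G.Preconnected)
    (hdeg : ∀ v, (G.neighborSet v).encard ≤ 2) {u : V} {w : G.Walk u u} (hw : w.IsCycle) :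
    Nonempty (G ≃g cycleGraph w.length) := by
  have hlen := hw.three_le_length
  obtain ⟨f⟩ := (cycleGraph_isContained_iff hlen).mpr ⟨u, w, hw, rfl⟩
  have htop : f.toSubgraph = ⊤ := by
    refine eq_top_of_forall_neighborSet_subset hG ⟨f ⟨0, by omega⟩, by simp⟩ ?_
    rintro _ ⟨i, -, rfl⟩
    refine neighborSet_subset_of_encard_le_two (hdeg _) ?_
    rw [Copy.toHom_apply, encard_neighborSet_toSubgraph_copy,
      encard_neighborSet_cycleGraph hlen]
  have e := f.isoToSubgraph
  rw [htop] at e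
  exact ⟨(e.trans Subgraph.topIso).symm⟩

theorem neighborSet_start_subset_of_isAcyclic (hG : G.IsAcyclic) {u v : V} {p : G.Walk u v}
    (hp : p.IsPath)
    (hmax : ∀ (u' v' : V) (q : G.Walk u' v'), q.IsPath → q.length ≤ p.length) :
    G.neighborSet u ⊆ p.toSubgraph.neighborSet u := by
  intro x hux
  have hx : x ∈ p.support := by
    by_contra hx
    have := hmax _ _ (.cons hux.symm p) (hp.cons hx)
    simp at this
  have hnil : ¬p.Nil := by
    intro hnil
    simp [Walk.nil_iff_support_eq.mp hnil, hux.ne'] at hx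
  rw [hG.eq_snd_of_adj_start hp hux hx]
  exact p.toSubgraph_adj_snd hnil

theorem nonempty_iso_pathGraph (hG : G.Preconnected) (hacyc : G.IsAcyclic)
    (hdeg : ∀ v, (G.neighborSet v).encard ≤ 2) {u v : V} {p : G.Walk u v} (hp : p.IsPath)
    (hmax : ∀ (u' v' : V) (q : G.Walk u' v'), q.IsPath → q.length ≤ p.length) :
    Nonempty (G ≃g pathGraph (p.length + 1)) := by
  classical
  have htop : p.toSubgraph = ⊤ := by
    refine eq_top_of_forall_neighborSet_subset hG ⟨u, by simp⟩ fun x hx ↦ ?_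
    obtain ⟨i, rfl, hi⟩ :=
      Walk.mem_support_iff_exists_getVert.mp (p.mem_verts_toSubgraph.mp hx)
    rcases Nat.eq_zero_or_pos i with rfl | hpos
    · rw [Walk.getVert_zero]
      exact neighborSet_start_subset_of_isAcyclic hacyc hp hmax
    rcases hi.eq_or_lt with rfl | hlt
    · rw [Walk.getVert_length, ← p.toSubgraph_reverse]
      exact neighborSet_start_subset_of_isAcyclic hacyc hp.reverse (by simpa using hmax)
    · refine neighborSet_subset_of_encard_le_two (hdeg _) ?_
      rw [← p.finite_neighborSet_toSubgraph.cast_ncard_eq,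
        hp.ncard_neighborSet_toSubgraph_internal_eq_two hpos.ne' hlt]
      rfl
  have e := hp.pathGraphIsoToSubgraph
  rw [htop] at e
  exact ⟨(e.trans Subgraph.topIso).symm⟩

theorem exists_iso_pathGraph_or_cycleGraph [Finite G.edgeSet] (hG : G.Connected)
    (hdeg : ∀ v, (G.neighborSet v).encard ≤ 2) :
    ∃ k, Nonempty (G ≃g pathGraph k) ∨ Nonempty (G ≃g cycleGraph k) := by
  by_cases hacyc : G.IsAcyclic
  · have := hG.nonempty
    obtain ⟨u, v, p, hp, hmax⟩ := Walk.exists_isPath_forall_isPath_length_le_length G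
    exact ⟨_, .inl (nonempty_iso_pathGraph hG.preconnected hacyc hdeg hp hmax)⟩
  · obtain ⟨u, w, hw⟩ : ∃ (u : V) (w : G.Walk u u), w.IsCycle := by
      simpa [IsAcyclic] using hacyc
    exact ⟨_, .inr (nonempty_iso_cycleGraph hG.preconnected hdeg hw)⟩

end MaxDegreeTwo

theorem FGraph.Prolific.exists_two_lt_encard_neighborSet {X : FGraph} [Finite X.G.edgeSet]
    (hX : X.Prolific) : ∃ v, 2 < (X.G.neighborSet v).encard := by
  obtain ⟨hconn, hpath, hcycle, -⟩ := hX
  by_contra! hdeg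
  obtain ⟨k, ⟨⟨e⟩⟩ | ⟨⟨e⟩⟩⟩ := exists_iso_pathGraph_or_cycleGraph hconn hdeg
  · exact (hpath k).false e
  · exact (hcycle k).false e

/-- For a prolific graph, the circumference strictly increases: `c(L(G)) > c(G)`. -/
theorem circumference_line_gt (X : FGraph) [Finite X.V] (hp : X.Prolific) :
    X.circumf < X.line.circumf :=
  circumference_line_gt_general hp.1.preconnected hp.exists_two_lt_encard_neighborSet
    (bddAbove_cycleLengths _)
end
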